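/- Let Q ∈ ℂ^{2d×2d} be symmetric, F = J Q, and let S be the singular space of Q. Then for every X ∈ S and every t ∈ ℝ, exp(2 i t F)·X = exp(−2 t Im F)·X. -/

import Mathlib

open Matrix Complex

namespace Stmt9

/-- The standard symplectic matrix `J = [[0, I],[−I, 0]]` on `ℂ^{2d} = ℂ^d ⊕ ℂ^d`. -/
noncomputable def J (d : ℕ) : Matrix (Fin d ⊕ Fin d) (Fin d ⊕ Fin d) ℂ :=
  Matrix.fromBlocks 0 1 (-1) 0

/-- The singular space of a symmetric `Q ∈ ℂ^{2d×2d}` with Hamilton map `F = J Q`: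
`S = { X ∈ ℝ^{2d} : Re F (Im F)^j X = 0 for 0 ≤ j ≤ 2d−1 }`. -/
def singularSpace (d : ℕ) (Q : Matrix (Fin d ⊕ Fin d) (Fin d ⊕ Fin d) ℂ) :
    Set (Fin d ⊕ Fin d → ℝ) :=
  {X | ∀ j : ℕ, j ≤ 2 * d - 1 →
    (((J d * Q).map Complex.re) * ((J d * Q).map Complex.im) ^ j).mulVec X = 0}

lemma all_pow {n : Type*} [Fintype n] [DecidableEq n] (A B : Matrix n n ℝ) (X : n → ℝ)
    (h : ∀ j < Fintype.card n, (A * B ^ j).mulVec X = 0) (j : ℕ) :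
    (A * B ^ j).mulVec X = 0 := by
  rcases isEmpty_or_nonempty n with hn | hn
  · exact Subsingleton.elim _ _
  have hlt : ((Polynomial.X ^ j : Polynomial ℝ) %ₘ B.charpoly).natDegree < Fintype.card n := by
    have h2 := Polynomial.natDegree_modByMonic_lt (Polynomial.X ^ j : Polynomial ℝ)
      (Matrix.charpoly_monic B) (by
        intro h1
        have := Matrix.charpoly_natDegree_eq_dim B
        rw [h1] at this
        have h0 : 0 < Fintype.card n := Fintype.card_pos
        simp at this
        omega)
    rwa [Matrix.charpoly_natDegree_eq_dim] at h2
  rw [Matrix.pow_eq_aeval_mod_charpoly, Polynomial.aeval_eq_sum_range' hlt, Finset.mul_sum,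
    Matrix.sum_mulVec]
  refine Finset.sum_eq_zero fun i hi => ?_
  rw [Matrix.mul_smul, Matrix.smul_mulVec, h i (Finset.mem_range.1 hi), smul_zero]

lemma exp_hasSum {n 𝕜 : Type*} [Fintype n] [DecidableEq n] [RCLike 𝕜] (M : Matrix n n 𝕜)
    (v : n → 𝕜) (i : n) :
    HasSum (fun k : ℕ => ((k.factorial : 𝕜)⁻¹) * (M ^ k).mulVec v i)
      ((NormedSpace.exp M).mulVec v i) := by
  let _ : NormedRing (Matrix n n 𝕜) := Matrix.linftyOpNormedRing
  let _ : NormedAlgebra 𝕜 (Matrix n n 𝕜) := Matrix.linftyOpNormedAlgebra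
  have : @CompleteSpace (Matrix n n 𝕜) PseudoMetricSpace.toUniformSpace :=
    FiniteDimensional.complete 𝕜 _
  have h := NormedSpace.exp_series_hasSum_exp' (𝕂 := 𝕜) M
  let L : Matrix n n 𝕜 →ₗ[𝕜] 𝕜 :=
    { toFun := fun A => A.mulVec v i
      map_add' := fun A B => by simp [Matrix.add_mulVec]
      map_smul' := fun c A => by simp [Matrix.smul_mulVec] }
  have h2 := h.mapL (LinearMap.toContinuousLinearMap L)
  have h3 : (fun k : ℕ => ((k.factorial : 𝕜)⁻¹) * (M ^ k).mulVec v i)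
      = fun k : ℕ => LinearMap.toContinuousLinearMap L ((k.factorial : 𝕜)⁻¹ • M ^ k) := by
    funext k
    simp [L, Matrix.smul_mulVec]
  rw [h3]
  exact h2

lemma pow_eq {n : Type*} [Fintype n] [DecidableEq n] (F : Matrix n n ℂ) (X : n → ℝ)
    (h : ∀ j, (F.map Complex.re * (F.map Complex.im) ^ j).mulVec X = 0) (t : ℝ) (k : ℕ) :
    (((2 * Complex.I * t) • F) ^ k).mulVec (fun j => (X j : ℂ))
      = fun j => ((((-(2 * t)) • F.map Complex.im) ^ k).mulVec X j : ℂ) := by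
  induction k with
  | zero => simp
  | succ k ih =>
    rw [pow_succ', ← Matrix.mulVec_mulVec, ih]
    funext i
    rw [pow_succ', ← Matrix.mulVec_mulVec]
    have h1 : (F.map Complex.re).mulVec ((((-(2 * t)) • F.map Complex.im) ^ k).mulVec X) = 0 := by
      rw [smul_pow, Matrix.smul_mulVec, Matrix.mulVec_smul, Matrix.mulVec_mulVec, h, smul_zero]
    generalize (((-(2 * t)) • F.map Complex.im) ^ k).mulVec X = Y at h1
    have h2 := congrFun h1 i
    simp only [Matrix.mulVec, dotProduct, Matrix.map_apply, Matrix.smul_apply, smul_eq_mul,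
      Pi.zero_apply] at h2 ⊢
    have h3 : ∑ x, ((F i x).re : ℂ) * (Y x : ℂ) = 0 := by exact_mod_cast h2
    have h4 : ∀ x, (2 * Complex.I * t) * F i x * (Y x : ℂ)
        = (2 * Complex.I * t) * (((F i x).re : ℂ) * (Y x : ℂ))
          + ((-(2 * t) * (F i x).im * Y x : ℝ) : ℂ) := by
      intro x
      conv_lhs => rw [← Complex.re_add_im (F i x)]
      push_cast
      linear_combination (2 * t * (F i x).im * Y x : ℂ) * Complex.I_mul_I
    simp_rw [h4]
    rw [Finset.sum_add_distrib, ← Finset.mul_sum, h3]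
    push_cast
    simp

/-- Let `Q ∈ ℂ^{2d×2d}` be symmetric with Hamilton map `F = J Q` and
singular space `S`.  Then for every `X ∈ S` and `t ∈ ℝ`,
`exp(2itF) X = exp(−2t Im F) X`. -/
theorem stmt_9 (d : ℕ) (Q : Matrix (Fin d ⊕ Fin d) (Fin d ⊕ Fin d) ℂ) (hQ : Q.IsSymm) :
    ∀ X ∈ singularSpace d Q, ∀ t : ℝ,
      (NormedSpace.exp ((2 * Complex.I * t) • (J d * Q))).mulVec
          (fun j => (X j : ℂ))
        = fun j => ((NormedSpace.exp ((-(2 * t)) •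
            ((J d * Q).map Complex.im))).mulVec X j : ℂ) := by
  intro X hX t
  have h := all_pow _ _ X (fun j hj => hX j (by simp at hj; omega))
  funext i
  have h1 := exp_hasSum ((2 * Complex.I * t) • (J d * Q)) (fun j => (X j : ℂ)) i
  have h2 := (exp_hasSum ((-(2 * t)) • ((J d * Q).map Complex.im)) X i).mapL Complex.ofRealCLM
  refine h1.unique ?_
  have h3 : (fun k : ℕ => ((k.factorial : ℂ)⁻¹) *
      (((2 * Complex.I * t) • (J d * Q)) ^ k).mulVec (fun j => (X j : ℂ)) i)
      = fun k : ℕ => Complex.ofRealCLM (((k.factorial : ℝ)⁻¹) *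
        (((-(2 * t)) • ((J d * Q).map Complex.im)) ^ k).mulVec X i) := by
    funext k
    rw [pow_eq _ X h t k]
    simp
  rw [h3]
  exact h2

end Stmt9
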